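/- Let α ∈ (π/2, π), ω₀ > 0, and let f : ℝ → ℂ be measurable and bounded with f(s) = 0 for s < 0 and f(s) → 1 as s → +∞. Then for every ρ > 0 and every φ ∈ (0, 2π) \ {φ₊, φ₋}, the limiting amplitude of the nonstationary diffracted wave exists and equals the Sommerfeld-type stationary diffracted wave: lim_{t→∞} e^{iω₀ t} · (i/(8π)) ∫_ℝ 𝒵(β, φ) e^{−iω₀(t − ρ cosh β)} f(t − ρ cosh β) dβ = (i/(8π)) ∫_ℝ 𝒵(β, φ) e^{iω₀ ρ cosh β} dβ, the limit integral converging absolutely. -/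

import Mathlib

/-!
The kernel is a combination of two differences `coth ((β + i a) / 4) - coth ((β + i b) / 4)`, where
`β` is real and `sin (a / 4)`, `sin (b / 4)` are nonzero: for `φ ∈ (0, 2π)` this is exactly the
exclusion of the critical directions `π ± α`. By the addition formula such a difference equals
`sinh (i (b - a) / 4) / (sinh ((β + i a) / 4) * sinh ((β + i b) / 4))`, and
`|sinh (x + i y)| ≥ |Im sinh (x + i y)| = |sin y| * cosh x`, so it is bounded by a constant times
`1 / cosh² (β / 4) ≤ 1 / (1 + (β / 4)²)`. Hence the kernel is integrable
(`integrable_Zker`). The factor `exp (i ω₀ t)` cancels the time dependence of the exponential in the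
integrand, and the limit follows by dominated convergence, with a constant multiple of the
modulus of the kernel as dominating function.
-/

open Real MeasureTheory Set Filter

/-- Complex hyperbolic cotangent. -/
noncomputable def ccoth (z : ℂ) : ℂ := Complex.cosh z / Complex.sinh z

/-- The function `U` from the Sommerfeld kernel construction. -/
noncomputable def Ufun (α : ℝ) (ζ : ℂ) : ℂ :=
  ccoth ((1/4 : ℂ) * (ζ - Complex.I * (π/2 : ℝ) + Complex.I * (α : ℝ))) -
  ccoth ((1/4 : ℂ) * (ζ - Complex.I * (π/2 : ℝ) - Complex.I * (α : ℝ)))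

/-- The function `Z`. -/
noncomputable def Zfun (α : ℝ) (z : ℂ) : ℂ :=
  -Ufun α (z - Complex.I * (π/2 : ℝ)) + Ufun α (z - Complex.I * (5*π/2 : ℝ))

/-- The Sommerfeld-type kernel `𝒵(β, φ) = Z(β + 2πi − iφ)`. -/
noncomputable def Zker (α : ℝ) (β φ : ℝ) : ℂ :=
  Zfun α ((β : ℂ) + 2*(π : ℝ)*Complex.I - Complex.I * (φ : ℝ))

/-- The left side is the modulus of the imaginary part of `sinh (x + i y)`. -/
lemma abs_sin_mul_cosh_le_norm_sinh (x y : ℝ) :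
    |Real.sin y| * Real.cosh x ≤ ‖Complex.sinh ((x : ℂ) + y * Complex.I)‖ := by
  have h : Complex.sinh ((x : ℂ) + y * Complex.I)
      = ((Real.sinh x * Real.cos y : ℝ) : ℂ)
        + ((Real.cosh x * Real.sin y : ℝ) : ℂ) * Complex.I := by
    rw [Complex.sinh_add, Complex.cosh_mul_I, Complex.sinh_mul_I]
    push_cast
    ring
  calc |Real.sin y| * Real.cosh x
      = |(Complex.sinh ((x : ℂ) + y * Complex.I)).im| := by
        rw [h]
        simp only [Complex.add_im, Complex.ofReal_im, Complex.im_ofReal_mul,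
          Complex.I_im, mul_one, zero_add]
        rw [abs_mul, abs_of_pos (Real.cosh_pos x), mul_comm]
    _ ≤ _ := Complex.abs_im_le_norm _

lemma one_add_sq_le_cosh_sq (x : ℝ) : 1 + x ^ 2 ≤ Real.cosh x ^ 2 := by
  have h : x ^ 2 ≤ Real.sinh x ^ 2 := by
    rw [sq_le_sq, Real.abs_sinh]
    exact Real.self_le_sinh_iff.2 (abs_nonneg x)
  rw [Real.cosh_sq]
  linarith

lemma measurable_ccoth : Measurable ccoth :=
  Complex.measurable_cosh.div Complex.measurable_sinh

/-- A difference of two hyperbolic cotangents along horizontal lines avoiding the poles is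
integrable: the limits `±1` at `±∞` cancel. -/
lemma integrable_ccoth_sub (a b : ℝ) (ha : Real.sin (a / 4) ≠ 0) (hb : Real.sin (b / 4) ≠ 0) :
    Integrable (fun β : ℝ => ccoth (((β / 4 : ℝ) : ℂ) + ((a / 4 : ℝ) : ℂ) * Complex.I)
      - ccoth (((β / 4 : ℝ) : ℂ) + ((b / 4 : ℝ) : ℂ) * Complex.I)) := by
  set N : ℝ := ‖Complex.sinh (((b / 4 : ℝ) : ℂ) * Complex.I - ((a / 4 : ℝ) : ℂ) * Complex.I)‖
    with hN
  have hdom : Integrable (fun β : ℝ =>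
      N / (|Real.sin (a / 4)| * |Real.sin (b / 4)|) * (1 + (β / 4) ^ 2)⁻¹) :=
    (integrable_inv_one_add_sq.comp_div (by norm_num : (4 : ℝ) ≠ 0)).const_mul _
  refine hdom.mono' ?_ (ae_of_all _ fun β => ?_)
  · refine Measurable.aestronglyMeasurable ?_
    exact (measurable_ccoth.comp (by fun_prop)).sub (measurable_ccoth.comp (by fun_prop))
  · have hA := abs_sin_mul_cosh_le_norm_sinh (β / 4) (a / 4)
    have hB := abs_sin_mul_cosh_le_norm_sinh (β / 4) (b / 4)
    have hc := Real.cosh_pos (β / 4)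
    have ha' := abs_pos.2 ha
    have hb' := abs_pos.2 hb
    have hA0 := norm_pos_iff.1 ((mul_pos ha' hc).trans_le hA)
    have hB0 := norm_pos_iff.1 ((mul_pos hb' hc).trans_le hB)
    have hkey : ccoth (((β / 4 : ℝ) : ℂ) + ((a / 4 : ℝ) : ℂ) * Complex.I)
        - ccoth (((β / 4 : ℝ) : ℂ) + ((b / 4 : ℝ) : ℂ) * Complex.I)
        = Complex.sinh (((b / 4 : ℝ) : ℂ) * Complex.I - ((a / 4 : ℝ) : ℂ) * Complex.I)
          / (Complex.sinh (((β / 4 : ℝ) : ℂ) + ((a / 4 : ℝ) : ℂ) * Complex.I)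
            * Complex.sinh (((β / 4 : ℝ) : ℂ) + ((b / 4 : ℝ) : ℂ) * Complex.I)) := by
      have e : ((b / 4 : ℝ) : ℂ) * Complex.I - ((a / 4 : ℝ) : ℂ) * Complex.I
          = (((β / 4 : ℝ) : ℂ) + ((b / 4 : ℝ) : ℂ) * Complex.I)
            - (((β / 4 : ℝ) : ℂ) + ((a / 4 : ℝ) : ℂ) * Complex.I) := by ring
      rw [e, Complex.sinh_sub, ccoth, ccoth, div_sub_div _ _ hA0 hB0]
      congr 1
      ring
    rw [hkey, norm_div, norm_mul, ← hN, ← div_eq_mul_inv, div_div]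
    refine div_le_div_of_nonneg_left (norm_nonneg _) (by positivity) ?_
    calc |Real.sin (a / 4)| * |Real.sin (b / 4)| * (1 + (β / 4) ^ 2)
        ≤ |Real.sin (a / 4)| * |Real.sin (b / 4)| * Real.cosh (β / 4) ^ 2 := by
          gcongr
          exact one_add_sq_le_cosh_sq _
      _ = (|Real.sin (a / 4)| * Real.cosh (β / 4))
          * (|Real.sin (b / 4)| * Real.cosh (β / 4)) := by ring
      _ ≤ _ := by gcongr

/-- The kernel is integrable away from the critical directions `φ = π ± α`. The second pair of
cotangents has no pole for any `φ ∈ (0, 2π)`. -/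
lemma integrable_Zker (α : ℝ) (hα : α ∈ Set.Ioo (π/2) π) (φ : ℝ)
    (hφ : φ ∈ Set.Ioo (0:ℝ) (2*π)) (hφp : φ ≠ π + α) (hφm : φ ≠ π - α) :
    Integrable (fun β : ℝ => Zker α β φ) := by
  obtain ⟨hα1, hα2⟩ := hα
  obtain ⟨hφ1, hφ2⟩ := hφ
  have hπ := Real.pi_pos
  have near : ∀ x : ℝ, x ≠ 0 → -(4 * π) < x → x < 4 * π → Real.sin (x / 4) ≠ 0 := by
    intro x h0 h1 h2 h
    have := (Real.sin_eq_zero_iff_of_lt_of_lt (by linarith) (by linarith)).1 h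
    exact h0 (by linarith)
  have h1 := near (π - φ + α) (fun h => hφp (by linarith)) (by linarith) (by linarith)
  have h2 := near (π - φ - α) (fun h => hφm (by linarith)) (by linarith) (by linarith)
  have h3 := near (-π - φ + α) (fun h => by linarith) (by linarith) (by linarith)
  have h4 := near (-π - φ - α) (fun h => by linarith) (by linarith) (by linarith)
  refine ((integrable_ccoth_sub _ _ h1 h2).neg.add (integrable_ccoth_sub _ _ h3 h4)).congr
    (ae_of_all _ fun β => ?_)
  simp only [Zker, Zfun, Ufun, Pi.add_apply, Pi.neg_apply]
  congr 3 <;> congr 1 <;> push_cast <;> ring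

/-- Limiting amplitude of the nonstationary diffracted wave: for a bounded measurable profile
`f` vanishing on the negative half-line and tending to `1` at `+∞`,
`lim_{t→∞} e^{iω₀t} u_d(ρ,φ,t) = (i/8π) ∫_ℝ 𝒵(β,φ) e^{iω₀ρ cosh β} dβ`,
the limit integral converging absolutely. -/
theorem limiting_amplitude_diffracted (α : ℝ) (hα : α ∈ Set.Ioo (π/2) π)
    (ω₀ : ℝ) (hω₀ : 0 < ω₀) (f : ℝ → ℂ) (hf_meas : Measurable f)
    (hf_bd : ∃ M : ℝ, ∀ s : ℝ, ‖f s‖ ≤ M) (hf0 : ∀ s < (0:ℝ), f s = 0)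
    (hf1 : Tendsto f atTop (nhds 1))
    (ρ : ℝ) (hρ : 0 < ρ) (φ : ℝ) (hφ : φ ∈ Set.Ioo (0:ℝ) (2*π))
    (hφp : φ ≠ π + α) (hφm : φ ≠ π - α) :
    Integrable (fun β : ℝ => Zker α β φ *
        Complex.exp (Complex.I * (ω₀ : ℂ) * (ρ : ℂ) * (Real.cosh β : ℂ))) ∧
    Tendsto (fun t : ℝ =>
        Complex.exp (Complex.I * (ω₀ : ℂ) * (t : ℂ)) *
          ((Complex.I / (8*(π:ℂ))) * ∫ β : ℝ, Zker α β φ *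
            (Complex.exp (-Complex.I * (ω₀ : ℂ) * ((t : ℂ) - (ρ : ℂ) * (Real.cosh β : ℂ))) *
              f (t - ρ * Real.cosh β))))
      atTop
      (nhds ((Complex.I / (8*(π:ℂ))) * ∫ β : ℝ, Zker α β φ *
          Complex.exp (Complex.I * (ω₀ : ℂ) * (ρ : ℂ) * (Real.cosh β : ℂ)))) := by
  have hZ := integrable_Zker α hα φ hφ hφp hφm
  obtain ⟨M, hM⟩ := hf_bd
  have hexp : ∀ β : ℝ, ‖Complex.exp (Complex.I * (ω₀ : ℂ) * (ρ : ℂ) * (Real.cosh β : ℂ))‖ = 1 := by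
    intro β
    rw [show Complex.I * (ω₀ : ℂ) * (ρ : ℂ) * (Real.cosh β : ℂ)
      = ((ω₀ * ρ * Real.cosh β : ℝ) : ℂ) * Complex.I by push_cast; ring]
    exact Complex.norm_exp_ofReal_mul_I _
  have hcosh : Measurable Real.cosh := Real.continuous_cosh.measurable
  have hexpm : Measurable fun β : ℝ =>
      Complex.exp (Complex.I * (ω₀ : ℂ) * (ρ : ℂ) * (Real.cosh β : ℂ)) := by
    have : Measurable fun β : ℝ => (Real.cosh β : ℂ) := Complex.measurable_ofReal.comp hcosh
    exact Complex.measurable_exp.comp (this.const_mul _)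
  constructor
  · refine hZ.mono (hZ.aestronglyMeasurable.mul hexpm.aestronglyMeasurable)
      (ae_of_all _ fun β => ?_)
    rw [norm_mul, hexp, mul_one]
  · have hrw : ∀ t : ℝ, Complex.exp (Complex.I * (ω₀ : ℂ) * (t : ℂ)) *
          ((Complex.I / (8*(π:ℂ))) * ∫ β : ℝ, Zker α β φ *
            (Complex.exp (-Complex.I * (ω₀ : ℂ) * ((t : ℂ) - (ρ : ℂ) * (Real.cosh β : ℂ))) *
              f (t - ρ * Real.cosh β)))
        = (Complex.I / (8*(π:ℂ))) * ∫ β : ℝ, Zker α β φ *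
            Complex.exp (Complex.I * (ω₀ : ℂ) * (ρ : ℂ) * (Real.cosh β : ℂ)) *
              f (t - ρ * Real.cosh β) := by
      intro t
      rw [mul_left_comm, ← integral_const_mul]
      congr 2
      funext β
      have e : Complex.exp (Complex.I * (ω₀ : ℂ) * (ρ : ℂ) * (Real.cosh β : ℂ))
          = Complex.exp (Complex.I * (ω₀ : ℂ) * (t : ℂ)) *
            Complex.exp (-Complex.I * (ω₀ : ℂ) * ((t : ℂ) - (ρ : ℂ) * (Real.cosh β : ℂ))) := by
        rw [← Complex.exp_add]
        congr 1
        ring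
      rw [e]
      ring
    simp only [hrw]
    refine Tendsto.const_mul _ ?_
    refine tendsto_integral_filter_of_dominated_convergence (fun β => ‖Zker α β φ‖ * M)
      (Eventually.of_forall fun t => ?_) (Eventually.of_forall fun t => ae_of_all _ fun β => ?_)
      (hZ.norm.mul_const M) (ae_of_all _ fun β => ?_)
    · refine (hZ.aestronglyMeasurable.mul hexpm.aestronglyMeasurable).mul ?_
      exact (hf_meas.comp ((hcosh.const_mul ρ).const_sub t)).aestronglyMeasurable
    · rw [norm_mul, norm_mul, hexp, mul_one]
      exact mul_le_mul_of_nonneg_left (hM _) (norm_nonneg _)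
    · have h1 : Tendsto (fun t : ℝ => t - ρ * Real.cosh β) atTop atTop :=
        tendsto_atTop_add_const_right _ _ tendsto_id
      simpa using (hf1.comp h1).const_mul (Zker α β φ *
        Complex.exp (Complex.I * (ω₀ : ℂ) * (ρ : ℂ) * (Real.cosh β : ℂ)))
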